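/- Suppose δ'_j < 1/4. Then |λ̂_j − λ_j − tr(P_j E P_j) + tr(P_j E R_j E P_j)| ≤ 8 ‖P_j E |R_j|^{1/2}‖_2^2 · 4δ'_j / (1 − 4δ'_j). -/

import Mathlib

open Matrix Finset

noncomputable def opNorm {d : ℕ} (A : Matrix (Fin d) (Fin d) ℝ) : ℝ :=
  ‖Matrix.toEuclideanCLM (𝕜 := ℝ) A‖

noncomputable def hsNorm {d : ℕ} (A : Matrix (Fin d) (Fin d) ℝ) : ℝ :=
  Real.sqrt (Matrix.trace (Aᵀ * A))

noncomputable def proj {d : ℕ} (u : Fin d → ℝ) : Matrix (Fin d) (Fin d) ℝ :=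
  Matrix.vecMulVec u u

/-- `|R_j|^{1/2}` : square root of the absolute value of the reduced resolvent. -/
noncomputable def sqrtAbsRes {d : ℕ} (lam : Fin d → ℝ) (u : Fin d → Fin d → ℝ)
    (j : Fin d) : Matrix (Fin d) (Fin d) ℝ :=
  ∑ k ∈ Finset.univ.filter (fun k => k ≠ j), (Real.sqrt |lam k - lam j|)⁻¹ • proj (u k)

/-- `|R_j|^{-1/2}`. -/
noncomputable def invSqrtAbsRes {d : ℕ} (lam : Fin d → ℝ) (u : Fin d → Fin d → ℝ)
    (j : Fin d) : Matrix (Fin d) (Fin d) ℝ :=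
  ∑ k ∈ Finset.univ.filter (fun k => k ≠ j), Real.sqrt |lam k - lam j| • proj (u k)

/-- the reduced resolvent `R_j`. -/
noncomputable def res {d : ℕ} (lam : Fin d → ℝ) (u : Fin d → Fin d → ℝ)
    (j : Fin d) : Matrix (Fin d) (Fin d) ℝ :=
  ∑ k ∈ Finset.univ.filter (fun k => k ≠ j), (lam k - lam j)⁻¹ • proj (u k)

/-- `δ_j`. -/
noncomputable def delta {d : ℕ} (lam : Fin d → ℝ) (u : Fin d → Fin d → ℝ) (j : Fin d)
    (gj : ℝ) (E : Matrix (Fin d) (Fin d) ℝ) : ℝ :=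
  opNorm ((sqrtAbsRes lam u j + (Real.sqrt gj)⁻¹ • proj (u j)) * E *
    (sqrtAbsRes lam u j + (Real.sqrt gj)⁻¹ • proj (u j)))

/-- `δ'_j`. -/
noncomputable def delta' {d : ℕ} (lam : Fin d → ℝ) (u : Fin d → Fin d → ℝ) (j : Fin d)
    (gj : ℝ) (E : Matrix (Fin d) (Fin d) ℝ) : ℝ :=
  max (opNorm (sqrtAbsRes lam u j * E * sqrtAbsRes lam u j))
    (max ((Real.sqrt gj)⁻¹ * hsNorm (sqrtAbsRes lam u j * E * proj (u j)))
      (gj⁻¹ * hsNorm (proj (u j) * E * proj (u j))))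

/-! Shift by `λ_j`, so that `A = Σ - λ_j` has eigenvalue `0` on `u_j`. In the coordinates `⟪u_j, v⟫`
and `|A|^{1/2} v` of a vector `v`, the three entries of `δ'_j` bound the blocks of `E`, whence
`|⟪v, E v⟫| ≤ ⟪v, |A| v⟫ + 2 g_j δ'_j ‖v‖²`; by Courant–Fischer `|λ̂_j - λ_j| ≤ 2 g_j δ'_j`. In the
same coordinates the complementary block of the eigenvalue equation for `λ̂_j` is the sign of `A`
plus a remainder of norm at most `2 δ'_j + δ'_j`, and eliminating it leaves the second-order
expansion of `λ̂_j` up to `‖|R_j|^{1/2} E u_j‖² * 3 δ'_j / (1 - 3 δ'_j)`. -/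

open scoped RealInnerProductSpace

section InnerProductSpace

variable {V : Type*} [NormedAddCommGroup V] [InnerProductSpace ℝ V]

lemma norm_map_of_involutive {S : V →ₗ[ℝ] V} (hS : S.IsSymmetric)
    (hSS : Function.Involutive S) (v : V) : ‖S v‖ = ‖v‖ := by
  rw [← sq_eq_sq₀ (norm_nonneg _) (norm_nonneg _), ← real_inner_self_eq_norm_sq, hS, hSS,
    real_inner_self_eq_norm_sq]

/- Pairing the first block equation with `S c` and using the second one gives
`(x - a + ⟪c, S c⟫) * α = ⟪S c, S z + α • c⟫`, while the first one alone makes `z` at most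
`|α| * ‖c‖ / (1 - r)`. -/
lemma abs_sub_add_inner_le_of_block_eigenvector {S : V →ₗ[ℝ] V} (hS : S.IsSymmetric)
    (hSS : Function.Involutive S) {c z : V} {a x α r : ℝ} (hr0 : 0 ≤ r) (hr1 : r < 1)
    (hz : ‖S z + α • c‖ ≤ r * ‖z‖) (hα : a * α + ⟪c, z⟫ = x * α) (hne : α = 0 → z ≠ 0) :
    |x - a + ⟪c, S c⟫| ≤ ‖c‖ ^ 2 * (r / (1 - r)) := by
  have hz_le : (1 - r) * ‖z‖ ≤ |α| * ‖c‖ := by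
    have htri : ‖S z‖ ≤ ‖S z + α • c‖ + ‖α • c‖ := norm_le_add_norm_add _ _
    rw [norm_map_of_involutive hS hSS, norm_smul, Real.norm_eq_abs] at htri
    linarith
  have hα0 : 0 < |α| := abs_pos.mpr fun h => by
    have : 0 < (1 - r) * ‖z‖ := mul_pos (by linarith) (norm_pos_iff.mpr (hne h))
    simp only [h, abs_zero, zero_mul] at hz_le
    linarith
  have hpair : (x - a + ⟪c, S c⟫) * α = ⟪S c, S z + α • c⟫ := by
    rw [inner_add_right, inner_smul_right, hS, hSS, hS]
    linarith
  rw [mul_div_assoc', le_div_iff₀ (by linarith)]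
  refine le_of_mul_le_mul_right ?_ hα0
  calc |x - a + ⟪c, S c⟫| * (1 - r) * |α|
      = |⟪S c, S z + α • c⟫| * (1 - r) := by rw [← hpair, abs_mul]; ring
    _ ≤ ‖c‖ * (r * ‖z‖) * (1 - r) := by
        refine mul_le_mul_of_nonneg_right ?_ (by linarith)
        refine (abs_real_inner_le_norm _ _).trans ?_
        rw [norm_map_of_involutive hS hSS]
        gcongr
    _ = ‖c‖ * r * ((1 - r) * ‖z‖) := by ring
    _ ≤ ‖c‖ * r * (|α| * ‖c‖) := by gcongr
    _ = ‖c‖ ^ 2 * r * |α| := by ring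

lemma abs_inner_map_smul_add_le {E T : V →ₗ[ℝ] V} (hE : E.IsSymmetric) (hT : T.IsSymmetric)
    {e : V} {g δ : ℝ} (hg : 0 ≤ g) (hG : ∀ w, ‖T (E (T w))‖ ≤ δ * ‖w‖)
    (hc : ‖T (E e)‖ ≤ √g * δ) (ha : |⟪e, E e⟫| ≤ g * δ) (α : ℝ) (z : V) :
    |⟪α • e + T z, E (α • e + T z)⟫| ≤ δ * (√g * |α| + ‖z‖) ^ 2 := by
  have hexpand : ⟪α • e + T z, E (α • e + T z)⟫ =
      α ^ 2 * ⟪e, E e⟫ + 2 * (α * ⟪T (E e), z⟫) + ⟪z, T (E (T z))⟫ := by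
    have hcross : ⟪e, E (T z)⟫ = ⟪T (E e), z⟫ := by rw [hT, hE]
    have hcross' : ⟪z, T (E e)⟫ = ⟪T (E e), z⟫ := real_inner_comm _ _
    simp only [map_add, map_smul, inner_add_left, inner_add_right, real_inner_smul_left,
      real_inner_smul_right, hT z, hcross, hcross']
    ring
  have hdiag : |α ^ 2 * ⟪e, E e⟫| ≤ α ^ 2 * (g * δ) := by
    rw [abs_mul, abs_sq]
    gcongr
  have hcoupling : |α * ⟪T (E e), z⟫| ≤ |α| * (√g * δ * ‖z‖) := by
    rw [abs_mul]
    gcongr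
    exact (abs_real_inner_le_norm _ _).trans (by gcongr)
  have hcompl : |⟪z, T (E (T z))⟫| ≤ ‖z‖ * (δ * ‖z‖) :=
    (abs_real_inner_le_norm _ _).trans (by gcongr; exact hG z)
  calc |⟪α • e + T z, E (α • e + T z)⟫|
      ≤ α ^ 2 * (g * δ) + 2 * (|α| * (√g * δ * ‖z‖)) + ‖z‖ * (δ * ‖z‖) := by
        rw [hexpand]
        refine (abs_add_three _ _ _).trans ?_
        rw [abs_mul 2, abs_two]
        gcongr
    _ = δ * (√g * |α| + ‖z‖) ^ 2 := by
        rw [add_sq, mul_pow, Real.sq_sqrt hg, sq_abs]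
        ring

lemma exists_ne_zero_forall_inner_eq_zero {κ : Type*} [Fintype κ] (u : κ → V)
    (hκ : Fintype.card κ < Module.finrank ℝ V) : ∃ v : V, v ≠ 0 ∧ ∀ k, ⟪u k, v⟫ = 0 := by
  have : FiniteDimensional ℝ V := .of_finrank_pos (by lia)
  let coords : V →ₗ[ℝ] (κ → ℝ) := LinearMap.pi fun k => innerₗ V (u k)
  obtain ⟨v, hv, hv0⟩ := (Submodule.ne_bot_iff _).mp
    (LinearMap.ker_ne_bot_of_finrank_lt (f := coords) (by simpa using hκ))
  exact ⟨v, hv0, congrFun (LinearMap.mem_ker.mp hv)⟩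

end InnerProductSpace

section DiagOp

variable {V ι : Type*} [NormedAddCommGroup V] [InnerProductSpace ℝ V] [Fintype ι]

/-- The operator that is diagonal in the orthonormal basis `b`, with eigenvalues `f`. -/
noncomputable def diagOp (b : OrthonormalBasis ι ℝ V) (f : ι → ℝ) : V →ₗ[ℝ] V :=
  ∑ k, f k • (InnerProductSpace.rankOne ℝ (b k) (b k)).toLinearMap

variable (b c : OrthonormalBasis ι ℝ V)

@[simp]
lemma diagOp_apply_basis (f : ι → ℝ) (k : ι) : diagOp b f (b k) = f k • b k := by
  classical
  simp [diagOp, orthonormal_iff_ite.mp b.orthonormal, ite_smul, smul_ite]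

lemma isSymmetric_diagOp (f : ι → ℝ) : (diagOp b f).IsSymmetric :=
  LinearMap.isSymmetric_sum _ fun k _ =>
    (InnerProductSpace.isSymmetric_rankOne_self (b k)).smul (conj_trivial _)

lemma diagOp_add (f h : ι → ℝ) : diagOp b (f + h) = diagOp b f + diagOp b h :=
  b.toBasis.ext fun k => by simp [add_smul]

lemma diagOp_sub (f h : ι → ℝ) : diagOp b (f - h) = diagOp b f - diagOp b h :=
  b.toBasis.ext fun k => by simp [sub_smul]

lemma diagOp_const (r : ℝ) : diagOp b (fun _ => r) = r • LinearMap.id :=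
  b.toBasis.ext fun k => by simp

lemma diagOp_sub_const (f : ι → ℝ) (r : ℝ) :
    diagOp b (fun k => f k - r) = diagOp b f - r • LinearMap.id :=
  b.toBasis.ext fun k => by simp [sub_smul]

lemma diagOp_diagOp (f h : ι → ℝ) (v : V) : diagOp b f (diagOp b h v) = diagOp b (f * h) v := by
  have : diagOp b f ∘ₗ diagOp b h = diagOp b (f * h) :=
    b.toBasis.ext fun k => by simp [smul_smul, mul_comm]
  exact LinearMap.congr_fun this v

lemma diagOp_eq_id {f : ι → ℝ} (hf : ∀ k, f k = 1) (v : V) : diagOp b f v = v := by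
  rw [show f = fun _ => 1 from funext hf, diagOp_const, one_smul, LinearMap.id_apply]

lemma inner_diagOp_self (f : ι → ℝ) (v : V) : ⟪v, diagOp b f v⟫ = ∑ k, f k * ⟪b k, v⟫ ^ 2 := by
  simp only [diagOp, LinearMap.sum_apply, LinearMap.smul_apply, ContinuousLinearMap.coe_coe,
    InnerProductSpace.rankOne_apply, inner_sum, real_inner_smul_right, real_inner_comm (b _) v, sq]

lemma norm_diagOp_sq (f : ι → ℝ) (v : V) : ‖diagOp b f v‖ ^ 2 = ⟪v, diagOp b (f * f) v⟫ := by
  rw [← real_inner_self_eq_norm_sq, isSymmetric_diagOp, diagOp_diagOp]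

lemma norm_diagOp_le {f : ι → ℝ} {C : ℝ} (hC : 0 ≤ C) (hf : ∀ k, |f k| ≤ C) (v : V) :
    ‖diagOp b f v‖ ≤ C * ‖v‖ := by
  refine le_of_sq_le_sq ?_ (by positivity)
  rw [norm_diagOp_sq, inner_diagOp_self, mul_pow, ← b.sum_sq_inner_right, mul_sum]
  refine sum_le_sum fun k _ => mul_le_mul_of_nonneg_right ?_ (sq_nonneg _)
  rw [Pi.mul_apply, ← sq, ← sq_abs]
  exact pow_le_pow_left₀ (abs_nonneg _) (hf k) 2

/- By dimension count some `v ≠ 0` is spanned both by `b k`, `k ≤ j`, and by `c k`, `j ≤ k`; on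
such a `v` the first form is at least `f j * ‖v‖ ^ 2` and the second at most `h j * ‖v‖ ^ 2`. -/
lemma apply_le_apply_of_inner_diagOp_le [LinearOrder ι] {f h : ι → ℝ} {j : ι}
    (hf : ∀ k ≤ j, f j ≤ f k) (hh : ∀ k, j ≤ k → h k ≤ h j)
    (hle : ∀ v, ⟪v, diagOp b f v⟫ ≤ ⟪v, diagOp c h v⟫) : f j ≤ h j := by
  have hdim : Fintype.card {k // k ≠ j} < Module.finrank ℝ V := by
    rw [Module.finrank_eq_card_basis b.toBasis]
    exact Fintype.card_subtype_lt (x := j) (by simp)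
  obtain ⟨v, hv0, hv⟩ := exists_ne_zero_forall_inner_eq_zero
    (fun k : {k // k ≠ j} => if k.1 < j then c k else b k) hdim
  have hlow : f j * ‖v‖ ^ 2 ≤ ⟪v, diagOp b f v⟫ := by
    rw [inner_diagOp_self, ← b.sum_sq_inner_right, mul_sum]
    refine sum_le_sum fun k _ => ?_
    rcases le_or_gt k j with hk | hk
    · exact mul_le_mul_of_nonneg_right (hf k hk) (sq_nonneg _)
    · have : ⟪b k, v⟫ = 0 := by simpa [hk.not_gt] using hv ⟨k, hk.ne'⟩
      simp [this]
  have hupp : ⟪v, diagOp c h v⟫ ≤ h j * ‖v‖ ^ 2 := by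
    rw [inner_diagOp_self, ← c.sum_sq_inner_right, mul_sum]
    refine sum_le_sum fun k _ => ?_
    rcases le_or_gt j k with hk | hk
    · exact mul_le_mul_of_nonneg_right (hh k hk) (sq_nonneg _)
    · have : ⟪c k, v⟫ = 0 := by simpa [hk] using hv ⟨k, hk.ne⟩
      simp [this]
  exact le_of_mul_le_mul_right (hlow.trans ((hle v).trans hupp)) (by positivity)

end DiagOp

section ReducedResolvent

variable {V ι : Type*} [NormedAddCommGroup V] [InnerProductSpace ℝ V] [Fintype ι]
  (b c : OrthonormalBasis ι ℝ V) {μ ν : ι → ℝ} {j : ι} {g δ : ℝ} {E : V →ₗ[ℝ] V}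

/-- `|R|^{1/2}`, where `R` is the reduced resolvent of `diagOp b μ` at the eigenvalue `0`. It
vanishes on the kernel of `diagOp b μ` because `0⁻¹ = 0`; for the same reason `R` itself is
`diagOp b μ⁻¹`. -/
noncomputable def sqrtAbsInvOp (b : OrthonormalBasis ι ℝ V) (μ : ι → ℝ) : V →ₗ[ℝ] V :=
  diagOp b fun k => (√|μ k|)⁻¹

/-- `|A|^{1/2}` for `A = diagOp b μ`. -/
noncomputable def sqrtAbsOp (b : OrthonormalBasis ι ℝ V) (μ : ι → ℝ) : V →ₗ[ℝ] V :=
  diagOp b fun k => √|μ k|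

/-- The sign of `diagOp b μ`, with the value `1` on the kernel, so that it is an involution. -/
noncomputable def signOp (b : OrthonormalBasis ι ℝ V) (μ : ι → ℝ) : V →ₗ[ℝ] V :=
  diagOp b fun k => if 0 ≤ μ k then 1 else -1

lemma isSymmetric_sqrtAbsInvOp (μ : ι → ℝ) : (sqrtAbsInvOp b μ).IsSymmetric :=
  isSymmetric_diagOp b _

lemma involutive_signOp (μ : ι → ℝ) : Function.Involutive (signOp b μ) := fun v => by
  rw [signOp, diagOp_diagOp]
  exact diagOp_eq_id b (fun k => by simp only [Pi.mul_apply]; split_ifs <;> norm_num) v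

lemma sqrtAbsInvOp_signOp_sqrtAbsInvOp (μ : ι → ℝ) (v : V) :
    sqrtAbsInvOp b μ (signOp b μ (sqrtAbsInvOp b μ v)) = diagOp b μ⁻¹ v := by
  rw [sqrtAbsInvOp, signOp, diagOp_diagOp, diagOp_diagOp]
  congr 2
  funext k
  have hsq : (√|μ k|)⁻¹ * (√|μ k|)⁻¹ = |μ k|⁻¹ := by
    rw [← mul_inv, Real.mul_self_sqrt (abs_nonneg _)]
  simp only [Pi.mul_apply, Pi.inv_apply]
  rw [mul_right_comm, hsq]
  split_ifs with hk
  · rw [abs_of_nonneg hk, mul_one]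
  · rw [abs_of_neg (not_le.mp hk), inv_neg, mul_neg_one, neg_neg]

lemma signOp_sqrtAbsOp (μ : ι → ℝ) (v : V) :
    signOp b μ (sqrtAbsOp b μ v) = sqrtAbsInvOp b μ (diagOp b μ v) := by
  rw [sqrtAbsInvOp, signOp, sqrtAbsOp, diagOp_diagOp, diagOp_diagOp]
  congr 2
  funext k
  have hsqrt : √|μ k| = (√|μ k|)⁻¹ * |μ k| := by rw [inv_mul_eq_div, Real.div_sqrt]
  have hsign : (if 0 ≤ μ k then 1 else -1) * |μ k| = μ k := by
    split_ifs with hk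
    · rw [abs_of_nonneg hk, one_mul]
    · rw [abs_of_neg (not_le.mp hk), neg_one_mul, neg_neg]
  simp only [Pi.mul_apply]
  rw [hsqrt, mul_left_comm, hsign, ← hsqrt]

lemma norm_sqrtAbsOp_sq (μ : ι → ℝ) (v : V) :
    ‖sqrtAbsOp b μ v‖ ^ 2 = ⟪v, diagOp b |μ| v⟫ := by
  rw [sqrtAbsOp, norm_diagOp_sq]
  congr 3
  exact funext fun k => Real.mul_self_sqrt (abs_nonneg _)

lemma norm_sqrtAbsInvOp_sqrtAbsInvOp_le (hg : 0 < g) (hj : μ j = 0)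
    (hgap : ∀ k, k ≠ j → g ≤ |μ k|) (v : V) :
    ‖sqrtAbsInvOp b μ (sqrtAbsInvOp b μ v)‖ ≤ g⁻¹ * ‖v‖ := by
  rw [sqrtAbsInvOp, diagOp_diagOp]
  refine norm_diagOp_le b (by positivity) (fun k => ?_) v
  rw [Pi.mul_apply, abs_mul_self, ← mul_inv, Real.mul_self_sqrt (abs_nonneg _)]
  by_cases hk : k = j
  · simp [hk, hj, hg.le]
  · exact inv_anti₀ hg (hgap k hk)

lemma sqrtAbsInvOp_apply_basis_eq_zero (hj : μ j = 0) : sqrtAbsInvOp b μ (b j) = 0 := by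
  simp [sqrtAbsInvOp, hj]

lemma inner_smul_add_sqrtAbsInvOp_sqrtAbsOp (hj : μ j = 0) (hμ : ∀ k, k ≠ j → μ k ≠ 0) (v : V) :
    ⟪b j, v⟫ • b j + sqrtAbsInvOp b μ (sqrtAbsOp b μ v) = v := by
  classical
  have hid : (InnerProductSpace.rankOne ℝ (b j) (b j)).toLinearMap +
      sqrtAbsInvOp b μ ∘ₗ sqrtAbsOp b μ = LinearMap.id := b.toBasis.ext fun k => by
    by_cases hk : k = j
    · simp [sqrtAbsInvOp, sqrtAbsOp, hk, hj]
    · have : √|μ k| ≠ 0 := by simpa using hμ k hk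
      simp [sqrtAbsInvOp, sqrtAbsOp, orthonormal_iff_ite.mp b.orthonormal, Ne.symm hk, smul_smul,
        this]
  exact LinearMap.congr_fun hid v

lemma abs_inner_map_self_le (hE : E.IsSymmetric) (hg : 0 < g) (hj : μ j = 0)
    (hgap : ∀ k, k ≠ j → g ≤ |μ k|) (hδ : δ ≤ 1 / 2)
    (hG : ∀ w, ‖sqrtAbsInvOp b μ (E (sqrtAbsInvOp b μ w))‖ ≤ δ * ‖w‖)
    (hc : ‖sqrtAbsInvOp b μ (E (b j))‖ ≤ √g * δ) (ha : |⟪b j, E (b j)⟫| ≤ g * δ) (v : V) :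
    |⟪v, E v⟫| ≤ ⟪v, diagOp b |μ| v⟫ + 2 * g * δ * ‖v‖ ^ 2 := by
  set α := ⟪b j, v⟫
  set z := sqrtAbsOp b μ v with hz
  have hδ0 : 0 ≤ δ := nonneg_of_mul_nonneg_right ((abs_nonneg _).trans ha) hg
  have hα : α ^ 2 ≤ ‖v‖ ^ 2 := by
    rw [← sq_abs]
    gcongr
    simpa using abs_real_inner_le_norm (b j) v
  have hform : |⟪v, E v⟫| ≤ δ * (√g * |α| + ‖z‖) ^ 2 := by
    have := abs_inner_map_smul_add_le hE (isSymmetric_sqrtAbsInvOp b μ) hg.le hG hc ha α z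
    rwa [inner_smul_add_sqrtAbsInvOp_sqrtAbsOp b hj fun k hk =>
      abs_pos.mp (hg.trans_le (hgap k hk))] at this
  calc |⟪v, E v⟫| ≤ δ * (√g * |α| + ‖z‖) ^ 2 := hform
    _ ≤ δ * (2 * ((√g * |α|) ^ 2 + ‖z‖ ^ 2)) := by gcongr; exact add_sq_le
    _ = 2 * δ * ‖z‖ ^ 2 + 2 * g * δ * α ^ 2 := by
        rw [mul_pow, Real.sq_sqrt hg.le, sq_abs]
        ring
    _ ≤ 1 * ‖z‖ ^ 2 + 2 * g * δ * ‖v‖ ^ 2 := by gcongr; linarith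
    _ = ⟪v, diagOp b |μ| v⟫ + 2 * g * δ * ‖v‖ ^ 2 := by rw [one_mul, hz, norm_sqrtAbsOp_sq]

/- The form bound sandwiches `diagOp c ν` between `diagOp b (μ ± (|μ| + 2 * g * δ))`, whose `j`-th
eigenvalues are `± 2 * g * δ`. -/
lemma abs_perturbed_eigenvalue_le [LinearOrder ι] (hμ : Antitone μ) (hν : Antitone ν) (hg : 0 < g)
    (hj : μ j = 0) (hgap : ∀ k, k ≠ j → g ≤ |μ k|) (hδ : δ ≤ 1 / 2)
    (hG : ∀ w, ‖sqrtAbsInvOp b μ (E (sqrtAbsInvOp b μ w))‖ ≤ δ * ‖w‖)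
    (hc : ‖sqrtAbsInvOp b μ (E (b j))‖ ≤ √g * δ) (ha : |⟪b j, E (b j)⟫| ≤ g * δ)
    (hsum : diagOp b μ + E = diagOp c ν) : |ν j| ≤ 2 * g * δ := by
  have hE : E.IsSymmetric :=
    eq_sub_of_add_eq' hsum ▸ (isSymmetric_diagOp c ν).sub (isSymmetric_diagOp b μ)
  have hform : ∀ v, |⟪v, E v⟫| ≤ ⟪v, diagOp b (|μ| + fun _ => 2 * g * δ) v⟫ := fun v => by
    simpa [diagOp_add, diagOp_const, inner_add_right, real_inner_smul_right] using
      abs_inner_map_self_le b hE hg hj hgap hδ hG hc ha v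
  have hnonpos : ∀ k, j ≤ k → μ k ≤ 0 := fun k hk => hj ▸ hμ hk
  have hnonneg : ∀ k ≤ j, 0 ≤ μ k := fun k hk => hj ▸ hμ hk
  refine abs_le.mpr ⟨?_, ?_⟩
  · suffices (μ - (|μ| + fun _ => 2 * g * δ) : ι → ℝ) j ≤ ν j by simpa [hj] using this
    refine apply_le_apply_of_inner_diagOp_le b c (fun k hk => ?_) (fun k hk => hν hk) fun v => ?_
    · simp [hj, abs_of_nonneg (hnonneg k hk)]
    · rw [← hsum, diagOp_sub, LinearMap.sub_apply, LinearMap.add_apply, inner_sub_right,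
        inner_add_right]
      linarith [neg_le_of_abs_le (hform v)]
  · suffices ν j ≤ (μ + (|μ| + fun _ => 2 * g * δ) : ι → ℝ) j by simpa [hj] using this
    refine apply_le_apply_of_inner_diagOp_le c b (fun k hk => hν hk) (fun k hk => ?_) fun v => ?_
    · simp [hj, abs_of_nonpos (hnonpos k hk)]
    · rw [← hsum, diagOp_add, LinearMap.add_apply, LinearMap.add_apply, inner_add_right,
        inner_add_right]
      linarith [le_of_abs_le (hform v)]

/- Applying `|R|^{1/2}` to the eigenvalue equation turns it into a block equation for the
coordinates `⟪b j, v⟫` and `|A|^{1/2} v` of `v`, with `signOp b μ` as leading term. -/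
lemma abs_sub_add_inner_le_of_eigenvector (hE : E.IsSymmetric) (hg : 0 < g) (hj : μ j = 0)
    (hgap : ∀ k, k ≠ j → g ≤ |μ k|)
    (hG : ∀ w, ‖sqrtAbsInvOp b μ (E (sqrtAbsInvOp b μ w))‖ ≤ δ * ‖w‖)
    {v : V} (hv0 : v ≠ 0) {x r : ℝ} (hv : (diagOp b μ + E) v = x • v)
    (hxr : g⁻¹ * |x| + δ ≤ r) (hr0 : 0 ≤ r) (hr1 : r < 1) :
    |x - ⟪b j, E (b j)⟫ + ⟪E (b j), diagOp b μ⁻¹ (E (b j))⟫| ≤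
      ‖sqrtAbsInvOp b μ (E (b j))‖ ^ 2 * (r / (1 - r)) := by
  set T := sqrtAbsInvOp b μ with hT
  set α := ⟪b j, v⟫ with hα
  set z := sqrtAbsOp b μ v with hz
  have hTsymm : T.IsSymmetric := isSymmetric_sqrtAbsInvOp b μ
  have hvz : α • b j + T z = v :=
    inner_smul_add_sqrtAbsInvOp_sqrtAbsOp b hj (fun k hk => abs_pos.mp (hg.trans_le (hgap k hk))) v
  have hEv : E v = α • E (b j) + E (T z) := by rw [← map_smul, ← map_add, hvz]
  have hTv : T v = T (T z) := by
    rw [← hvz, map_add, map_smul, hT, sqrtAbsInvOp_apply_basis_eq_zero b hj, smul_zero, zero_add]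
  have hblock : signOp b μ z + α • T (E (b j)) = x • T (T z) - T (E (T z)) := by
    have h := congrArg T hv
    rw [LinearMap.add_apply, map_add, hEv, map_add, map_smul, map_smul, hTv, hT,
      ← signOp_sqrtAbsOp, ← hT, ← hz, ← add_assoc] at h
    exact eq_sub_of_add_eq h
  have hcorner : ⟪b j, E (b j)⟫ * α + ⟪T (E (b j)), z⟫ = x * α := by
    have hAv : ⟪b j, diagOp b μ v⟫ = 0 := by
      rw [← isSymmetric_diagOp, diagOp_apply_basis, hj, zero_smul, inner_zero_left]
    have h := congrArg (⟪b j, ·⟫) hv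
    simp only [LinearMap.add_apply, inner_add_right, hAv, hEv, real_inner_smul_right, ← hα] at h
    rw [hTsymm, hE]
    linarith
  have hrem : ‖x • T (T z) - T (E (T z))‖ ≤ r * ‖z‖ :=
    calc ‖x • T (T z) - T (E (T z))‖ ≤ |x| * (g⁻¹ * ‖z‖) + δ * ‖z‖ := by
          refine (norm_sub_le _ _).trans (add_le_add ?_ (hG z))
          rw [norm_smul, Real.norm_eq_abs]
          gcongr
          exact norm_sqrtAbsInvOp_sqrtAbsInvOp_le b hg hj hgap z
      _ = (g⁻¹ * |x| + δ) * ‖z‖ := by ring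
      _ ≤ r * ‖z‖ := by gcongr
  rw [← sqrtAbsInvOp_signOp_sqrtAbsInvOp, ← hT, ← hTsymm]
  refine abs_sub_add_inner_le_of_block_eigenvector (isSymmetric_diagOp b _)
    (involutive_signOp b μ) hr0 hr1 (hblock ▸ hrem) hcorner fun hα0 hz0 => hv0 ?_
  rw [← hvz, hα0, hz0, zero_smul, map_zero, add_zero]

theorem abs_perturbed_eigenvalue_sub_add_inner_le [LinearOrder ι] (hμ : Antitone μ)
    (hν : Antitone ν) (hg : 0 < g) (hj : μ j = 0) (hgap : ∀ k, k ≠ j → g ≤ |μ k|) (hδ : δ < 1 / 3)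
    (hG : ∀ w, ‖sqrtAbsInvOp b μ (E (sqrtAbsInvOp b μ w))‖ ≤ δ * ‖w‖)
    (hc : ‖sqrtAbsInvOp b μ (E (b j))‖ ≤ √g * δ) (ha : |⟪b j, E (b j)⟫| ≤ g * δ)
    (hsum : diagOp b μ + E = diagOp c ν) :
    |ν j - ⟪b j, E (b j)⟫ + ⟪E (b j), diagOp b μ⁻¹ (E (b j))⟫| ≤
      ‖sqrtAbsInvOp b μ (E (b j))‖ ^ 2 * (3 * δ / (1 - 3 * δ)) := by
  have hE : E.IsSymmetric :=
    eq_sub_of_add_eq' hsum ▸ (isSymmetric_diagOp c ν).sub (isSymmetric_diagOp b μ)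
  have hδ0 : 0 ≤ δ := nonneg_of_mul_nonneg_right ((abs_nonneg _).trans ha) hg
  have hloc : g⁻¹ * |ν j| ≤ 2 * δ := by
    rw [inv_mul_le_iff₀ hg]
    linarith [abs_perturbed_eigenvalue_le b c hμ hν hg hj hgap (by linarith) hG hc ha hsum]
  exact abs_sub_add_inner_le_of_eigenvector b hE hg hj hgap hG (c.orthonormal.ne_zero j)
    (hsum ▸ diagOp_apply_basis c ν j) (by linarith) (by linarith) (by linarith)

end ReducedResolvent

section Matrix

variable {d : ℕ} {lam : Fin d → ℝ} {u : Fin d → Fin d → ℝ}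
  {b : OrthonormalBasis (Fin d) ℝ (EuclideanSpace ℝ (Fin d))}

lemma exists_orthonormalBasis_eq_toLp
    (hON : ∀ k l, u k ⬝ᵥ u l = if k = l then (1 : ℝ) else 0) :
    ∃ b : OrthonormalBasis (Fin d) ℝ (EuclideanSpace ℝ (Fin d)),
      ∀ k, b k = WithLp.toLp 2 (u k) := by
  have hon : Orthonormal ℝ fun k => WithLp.toLp 2 (u k) := orthonormal_iff_ite.mpr fun k l => by
    simp [EuclideanSpace.inner_toLp_toLp, hON, eq_comm]
  have hspan := hon.linearIndependent.span_eq_top_of_card_eq_finrank' (by simp)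
  exact ⟨OrthonormalBasis.mk hon hspan.ge, fun k => by simp⟩

lemma toEuclideanLin_proj (v : Fin d → ℝ) : toEuclideanLin (proj v) =
    (InnerProductSpace.rankOne ℝ (WithLp.toLp 2 v) (WithLp.toLp 2 v)).toLinearMap := by
  rw [← LinearEquiv.eq_symm_apply, InnerProductSpace.symm_toEuclideanLin_rankOne]
  simp [proj]

lemma toEuclideanLin_sum_smul_proj (hb : ∀ k, b k = WithLp.toLp 2 (u k)) (f : Fin d → ℝ) :
    toEuclideanLin (∑ k, f k • proj (u k)) = diagOp b f := by
  simp only [map_sum, map_smul, toEuclideanLin_proj, diagOp, hb]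

lemma toEuclideanLin_sqrtAbsRes (hb : ∀ k, b k = WithLp.toLp 2 (u k)) (j : Fin d) :
    toEuclideanLin (sqrtAbsRes lam u j) = sqrtAbsInvOp b fun k => lam k - lam j := by
  rw [sqrtAbsInvOp, ← toEuclideanLin_sum_smul_proj hb, sqrtAbsRes, sum_filter_of_ne]
  rintro k - hk rfl
  simp at hk

lemma toEuclideanLin_res (hb : ∀ k, b k = WithLp.toLp 2 (u k)) (j : Fin d) :
    toEuclideanLin (res lam u j) = diagOp b (fun k => lam k - lam j)⁻¹ := by
  rw [← toEuclideanLin_sum_smul_proj hb, res, sum_filter_of_ne]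
  · rfl
  · rintro k - hk rfl
    simp at hk

lemma isSymm_proj (v : Fin d → ℝ) : (proj v).IsSymm := transpose_vecMulVec v v

lemma isSymm_sum_smul_proj (s : Finset (Fin d)) (f : Fin d → ℝ) (u : Fin d → Fin d → ℝ) :
    (∑ k ∈ s, f k • proj (u k)).IsSymm := by
  simp only [IsSymm, transpose_sum, transpose_smul, (isSymm_proj _).eq]

lemma isSymm_sqrtAbsRes (lam : Fin d → ℝ) (u : Fin d → Fin d → ℝ) (j : Fin d) :
    (sqrtAbsRes lam u j).IsSymm :=
  isSymm_sum_smul_proj _ _ u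

lemma norm_toEuclideanLin_apply_le (A : Matrix (Fin d) (Fin d) ℝ)
    (w : EuclideanSpace ℝ (Fin d)) : ‖toEuclideanLin A w‖ ≤ opNorm A * ‖w‖ :=
  (toEuclideanCLM (𝕜 := ℝ) A).le_opNorm w

lemma trace_proj_mul_mul_proj {v : Fin d → ℝ} (hv : v ⬝ᵥ v = 1) (M : Matrix (Fin d) (Fin d) ℝ) :
    trace (proj v * M * proj v) =
      ⟪WithLp.toLp 2 v, toEuclideanLin M (WithLp.toLp 2 v)⟫ := by
  rw [toLpLin_toLp, EuclideanSpace.inner_toLp_toLp, proj, mul_assoc, mul_vecMulVec,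
    vecMulVec_mul_vecMulVec, trace_vecMulVec, dotProduct_smul, hv, smul_eq_mul, mul_one,
    star_trivial, toLin'_apply, dotProduct_comm]

lemma hsNorm_transpose (A : Matrix (Fin d) (Fin d) ℝ) : hsNorm Aᵀ = hsNorm A := by
  rw [hsNorm, hsNorm, transpose_transpose, trace_mul_comm]

lemma hsNorm_mul_proj {v : Fin d → ℝ} (hv : v ⬝ᵥ v = 1) (M : Matrix (Fin d) (Fin d) ℝ) :
    hsNorm (M * proj v) = ‖toEuclideanLin M (WithLp.toLp 2 v)‖ := by
  rw [hsNorm, proj, mul_vecMulVec, transpose_vecMulVec, vecMulVec_mul_vecMulVec, trace_vecMulVec,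
    dotProduct_smul, hv, smul_eq_mul, mul_one, toLpLin_toLp, norm_eq_sqrt_real_inner,
    EuclideanSpace.inner_toLp_toLp, star_trivial, toLin'_apply]

lemma hsNorm_proj_mul_mul_proj {v : Fin d → ℝ} (hv : v ⬝ᵥ v = 1)
    (M : Matrix (Fin d) (Fin d) ℝ) :
    hsNorm (proj v * M * proj v) = |⟪WithLp.toLp 2 v, toEuclideanLin M (WithLp.toLp 2 v)⟫| := by
  have hv_norm : ‖WithLp.toLp 2 v‖ = 1 := by
    rw [norm_eq_sqrt_real_inner, EuclideanSpace.inner_toLp_toLp, star_trivial, hv, Real.sqrt_one]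
  rw [hsNorm_mul_proj hv, toLpLin_mul_same, LinearMap.comp_apply, toEuclideanLin_proj,
    ContinuousLinearMap.coe_coe, InnerProductSpace.rankOne_apply, norm_smul, hv_norm, mul_one,
    Real.norm_eq_abs]

lemma hsNorm_mul_mul_comm {A B C : Matrix (Fin d) (Fin d) ℝ} (hA : A.IsSymm) (hB : B.IsSymm)
    (hC : C.IsSymm) : hsNorm (A * B * C) = hsNorm (C * B * A) := by
  rw [← hsNorm_transpose, transpose_mul, transpose_mul, hA, hB, hC, mul_assoc]

lemma hsNorm_sqrtAbsRes_mul_mul_proj (hb : ∀ k, b k = WithLp.toLp 2 (u k)) {j : Fin d}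
    (hj : u j ⬝ᵥ u j = 1) (E : Matrix (Fin d) (Fin d) ℝ) :
    hsNorm (sqrtAbsRes lam u j * E * proj (u j)) =
      ‖sqrtAbsInvOp b (fun k => lam k - lam j) (toEuclideanLin E (b j))‖ := by
  rw [hsNorm_mul_proj hj, toLpLin_mul_same, toEuclideanLin_sqrtAbsRes hb, hb,
    LinearMap.comp_apply]

lemma trace_proj_mul_res_mul_proj (hb : ∀ k, b k = WithLp.toLp 2 (u k)) {j : Fin d}
    (hj : u j ⬝ᵥ u j = 1) {E : Matrix (Fin d) (Fin d) ℝ} (hE : E.IsSymm) :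
    trace (proj (u j) * E * res lam u j * E * proj (u j)) =
      ⟪toEuclideanLin E (b j),
        diagOp b (fun k => lam k - lam j)⁻¹ (toEuclideanLin E (b j))⟫ := by
  have hE_symm : (toEuclideanLin E).IsSymmetric :=
    isSymmetric_toEuclideanLin_iff.mpr ((conjTranspose_eq_transpose_of_trivial E).trans hE)
  rw [mul_assoc (proj _), mul_assoc (proj _), trace_proj_mul_mul_proj hj,
    toLpLin_mul_same, toLpLin_mul_same, toEuclideanLin_res hb, ← hb, hE_symm]
  rfl

lemma delta'_nonneg (lam : Fin d → ℝ) (u : Fin d → Fin d → ℝ) (j : Fin d) (gj : ℝ)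
    (E : Matrix (Fin d) (Fin d) ℝ) : 0 ≤ delta' lam u j gj E :=
  (norm_nonneg _).trans (le_max_left _ _)

end Matrix

lemma mul_three_mul_div_le {x δ : ℝ} (hx : 0 ≤ x) (hδ0 : 0 ≤ δ) (hδ : δ < 1 / 4) :
    x * (3 * δ / (1 - 3 * δ)) ≤ 8 * x * (4 * δ) / (1 - 4 * δ) := by
  have hle : 3 * δ / (1 - 3 * δ) ≤ 4 * δ / (1 - 4 * δ) :=
    div_le_div₀ (by linarith) (by linarith) (by linarith) (by linarith)
  have hnonneg : 0 ≤ 4 * δ / (1 - 4 * δ) := div_nonneg (by linarith) (by linarith)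
  calc x * (3 * δ / (1 - 3 * δ)) ≤ x * (4 * δ / (1 - 4 * δ)) := by gcongr
    _ ≤ 8 * x * (4 * δ / (1 - 4 * δ)) := by gcongr; linarith
    _ = 8 * x * (4 * δ) / (1 - 4 * δ) := mul_div_assoc' _ _ _

theorem stmt13_general {d : ℕ} (lam : Fin d → ℝ) (u : Fin d → Fin d → ℝ)
    (hON : ∀ k l, u k ⬝ᵥ u l = if k = l then (1 : ℝ) else 0)
    (hlam : Antitone lam) (E : Matrix (Fin d) (Fin d) ℝ)
    (j : Fin d) (gj : ℝ) (hgj_pos : 0 < gj) (hgj : ∀ k, k ≠ j → gj ≤ |lam k - lam j|)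
    (lamh : Fin d → ℝ) (uh : Fin d → Fin d → ℝ)
    (hONh : ∀ k l, uh k ⬝ᵥ uh l = if k = l then (1 : ℝ) else 0)
    (hlamh : Antitone lamh)
    (hdecomp : (∑ k, lam k • proj (u k)) + E = ∑ k, lamh k • proj (uh k))
    (hdelta : delta' lam u j gj E < 1 / 3) :
    |lamh j - lam j - trace (proj (u j) * E * proj (u j)) +
        trace (proj (u j) * E * res lam u j * E * proj (u j))| ≤
      hsNorm (proj (u j) * E * sqrtAbsRes lam u j) ^ 2 *
        (3 * delta' lam u j gj E / (1 - 3 * delta' lam u j gj E)) := by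
  obtain ⟨b, hb⟩ := exists_orthonormalBasis_eq_toLp hON
  obtain ⟨c, hc⟩ := exists_orthonormalBasis_eq_toLp hONh
  have hj : u j ⬝ᵥ u j = 1 := by simp [hON]
  have hE : E.IsSymm := eq_sub_of_add_eq' hdecomp ▸
    (isSymm_sum_smul_proj _ lamh uh).sub (isSymm_sum_smul_proj _ lam u)
  have hsum : diagOp b (fun k => lam k - lam j) + toEuclideanLin E =
      diagOp c (fun k => lamh k - lam j) := by
    rw [diagOp_sub_const, diagOp_sub_const, ← toEuclideanLin_sum_smul_proj hb,
      ← toEuclideanLin_sum_smul_proj hc, ← hdecomp, map_add, add_sub_right_comm]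
  obtain ⟨hδ_compl, hδ⟩ := max_le_iff.mp (le_refl (delta' lam u j gj E))
  obtain ⟨hδ_coupling, hδ_corner⟩ := max_le_iff.mp hδ
  rw [inv_mul_le_iff₀ (Real.sqrt_pos.mpr hgj_pos), hsNorm_sqrtAbsRes_mul_mul_proj hb hj]
    at hδ_coupling
  rw [inv_mul_le_iff₀ hgj_pos, hsNorm_proj_mul_mul_proj hj, ← hb] at hδ_corner
  rw [trace_proj_mul_mul_proj hj, ← hb, trace_proj_mul_res_mul_proj hb hj hE,
    hsNorm_mul_mul_comm (isSymm_proj _) hE (isSymm_sqrtAbsRes lam u j),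
    hsNorm_sqrtAbsRes_mul_mul_proj hb hj]
  refine abs_perturbed_eigenvalue_sub_add_inner_le b c
    (fun _ _ h => sub_le_sub_right (hlam h) _) (fun _ _ h => sub_le_sub_right (hlamh h) _)
    hgj_pos (sub_self _) hgj hdelta (fun w => ?_) hδ_coupling hδ_corner hsum
  have := (norm_toEuclideanLin_apply_le _ w).trans
    (mul_le_mul_of_nonneg_right hδ_compl (norm_nonneg w))
  rwa [toLpLin_mul_same, toLpLin_mul_same, toEuclideanLin_sqrtAbsRes hb] at this

theorem stmt13 {d : ℕ} (lam : Fin d → ℝ) (u : Fin d → Fin d → ℝ)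
    (hON : ∀ k l, u k ⬝ᵥ u l = if k = l then (1 : ℝ) else 0)
    (hlam : Antitone lam)
    (E : Matrix (Fin d) (Fin d) ℝ) (hE : E.IsSymm)
    (j : Fin d) (gj : ℝ) (hgj_pos : 0 < gj)
    (hgj : IsLeast {x : ℝ | ∃ k, k ≠ j ∧ x = |lam k - lam j|} gj)
    (lamh : Fin d → ℝ) (uh : Fin d → Fin d → ℝ)
    (hONh : ∀ k l, uh k ⬝ᵥ uh l = if k = l then (1 : ℝ) else 0)
    (hlamh : Antitone lamh)
    (hdecomp : (∑ k, lam k • proj (u k)) + E = ∑ k, lamh k • proj (uh k))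
    (hdelta : delta' lam u j gj E < 1 / 4) :
    |lamh j - lam j - Matrix.trace (proj (u j) * E * proj (u j)) +
        Matrix.trace (proj (u j) * E * res lam u j * E * proj (u j))| ≤
      8 * hsNorm (proj (u j) * E * sqrtAbsRes lam u j) ^ 2 *
        (4 * delta' lam u j gj E) / (1 - 4 * delta' lam u j gj E) := by
  exact (stmt13_general lam u hON hlam E j gj hgj_pos (fun k hk => hgj.2 ⟨k, hk, rfl⟩) lamh uh hONh
    hlamh hdecomp (by linarith)).trans
      (mul_three_mul_div_le (sq_nonneg _) (delta'_nonneg lam u j gj E) hdelta)
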